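/- For almost every α ∈ [0,1] (with respect to Lebesgue measure), the asymptotic frequency of the digit j ≥ 1 in the regular continued fraction expansion of α, i.e., lim_{n→∞} (1/n)·#{1 ≤ k ≤ n : a_k(α) = j}, exists and equals (1/log 2)·(2·log(1+j) − log j − log(2+j)). -/

import Mathlib

/-- The Gauss map `T_G(0) = 0`, `T_G(x) = {1/x}` for `x ≠ 0`. -/
noncomputable def gaussMap (x : ℝ) : ℝ := if x = 0 then 0 else Int.fract (1 / x)

namespace GaussMap

open MeasureTheory Filter Set Topology

/-- The inverse branch `y ↦ 1 / (n + 1 + y)` of the Gauss map. -/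
noncomputable def branch (n : ℕ) (y : ℝ) : ℝ := 1 / (n + 1 + y)

/-- The transition probability of `y` to `branch n y` for the time-reversed Gauss map. -/
noncomputable def weight (n : ℕ) (y : ℝ) : ℝ := (1 + y) / ((n + 1 + y) * (n + 2 + y))

/-- The transfer operator of the Gauss map with respect to the Gauss measure. -/
noncomputable def transfer (f : ℝ → ℝ) (y : ℝ) : ℝ := ∑' n, weight n y * f (branch n y)

/-- The invariant probability density `1 / (log 2 * (1 + x))` of the Gauss map. -/
noncomputable def density (x : ℝ) : ℝ := (Real.log 2 * (1 + x))⁻¹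

/-- The Gauss measure on `[0, 1)`. -/
noncomputable def gaussMeasure : Measure ℝ :=
  (volume.restrict (Ico 0 1)).withDensity fun x => ENNReal.ofReal (density x)

lemma weight_nonneg (n : ℕ) {y : ℝ} (hy : 0 ≤ y) : 0 ≤ weight n y := by
  unfold weight; positivity

lemma branch_mem_Icc (n : ℕ) {y : ℝ} (hy : 0 ≤ y) : branch n y ∈ Icc (0 : ℝ) 1 := by
  unfold branch
  refine ⟨by positivity, ?_⟩
  rw [div_le_one (by positivity)]
  have : (0 : ℝ) ≤ n := n.cast_nonneg
  linarith

lemma sum_range_weight (N : ℕ) {y : ℝ} (hy : 0 ≤ y) :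
    ∑ n ∈ Finset.range N, weight n y = 1 - (1 + y) / (N + 1 + y) := by
  induction N with
  | zero => simp; field_simp; simp
  | succ N ih =>
    rw [Finset.sum_range_succ, ih, weight]
    push_cast
    field_simp
    ring

lemma tendsto_tail (y : ℝ) :
    Tendsto (fun N : ℕ => (1 + y) / ((N : ℝ) + 1 + y)) atTop (𝓝 0) := by
  refine Tendsto.const_div_atTop ?_ _
  simp_rw [add_assoc]
  exact tendsto_atTop_add_const_right _ _ tendsto_natCast_atTop_atTop

lemma hasSum_weight {y : ℝ} (hy : 0 ≤ y) : HasSum (fun n => weight n y) 1 := by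
  rw [hasSum_iff_tendsto_nat_of_nonneg fun n => weight_nonneg n hy]
  simp_rw [sum_range_weight _ hy]
  simpa using (tendsto_tail y).const_sub 1

lemma summable_transfer {f : ℝ → ℝ} {M : ℝ} (hM : ∀ x ∈ Icc (0 : ℝ) 1, |f x| ≤ M)
    {y : ℝ} (hy : 0 ≤ y) : Summable fun n => weight n y * f (branch n y) := by
  refine Summable.of_norm_bounded ((hasSum_weight hy).summable.mul_right M) fun n => ?_
  rw [norm_mul, Real.norm_of_nonneg (weight_nonneg n hy)]
  exact mul_le_mul_of_nonneg_left (hM _ (branch_mem_Icc n hy)) (weight_nonneg n hy)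

lemma transfer_const (c : ℝ) {y : ℝ} (hy : 0 ≤ y) : transfer (fun _ => c) y = c := by
  simpa [transfer] using ((hasSum_weight hy).mul_right c).tsum_eq

lemma transfer_neg (f : ℝ → ℝ) : transfer (fun x => -f x) = fun y => -transfer f y := by
  funext y
  simp [transfer, tsum_neg]

lemma branch_antitone_left {m n : ℕ} (h : m ≤ n) {y : ℝ} (hy : 0 ≤ y) :
    branch n y ≤ branch m y := by
  unfold branch
  gcongr

lemma branch_antitone_right (n : ℕ) {x y : ℝ} (hx : 0 ≤ x) (h : x ≤ y) :
    branch n y ≤ branch n x := by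
  unfold branch
  gcongr

/-- The distributions `weight · x` increase stochastically with `x`. -/
lemma sum_weight_mul_le_of_monotone {g : ℕ → ℝ} (hg : Monotone g) {x y : ℝ} (hx : 0 ≤ x)
    (hxy : x ≤ y) (N : ℕ) :
    ∑ n ∈ Finset.range N, weight n x * g n ≤ ∑ n ∈ Finset.range N, weight n y * g n +
      ((1 + y) / (N + 1 + y) - (1 + x) / (N + 1 + x)) * g N := by
  have hy := hx.trans hxy
  have key (N : ℕ) : weight N y - weight N x = ((1 + y) / (N + 1 + y) - (1 + x) / (N + 1 + x)) -
      ((1 + y) / ((N + 1 : ℕ) + 1 + y) - (1 + x) / ((N + 1 : ℕ) + 1 + x)) := by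
    unfold weight
    push_cast
    field_simp
    ring
  have tail_le (N : ℕ) : (1 + x) / (N + 1 + x) ≤ (1 + y) / (N + 1 + y) := by
    rw [div_le_div_iff₀ (by positivity) (by positivity)]
    nlinarith [(N.cast_nonneg : (0 : ℝ) ≤ N)]
  induction N with
  | zero =>
    have hx' : (1 + x) ≠ 0 := by positivity
    have hy' : (1 + y) ≠ 0 := by positivity
    simp [hx', hy']
  | succ N ih =>
    rw [Finset.sum_range_succ, Finset.sum_range_succ]
    nlinarith [key N, mul_nonneg (sub_nonneg.2 (tail_le (N + 1)))
      (sub_nonneg.2 (hg (Nat.le_succ N))), congrArg (· * g N) (key N)]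

lemma abs_le_of_antitoneOn {f : ℝ → ℝ} (hf : AntitoneOn f (Icc 0 1)) {x : ℝ}
    (hx : x ∈ Icc (0 : ℝ) 1) : |f x| ≤ |f 0| + |f 1| := by
  have h0 := hf (by simp) hx hx.1
  have h1 := hf hx (by simp) hx.2
  rw [abs_le]
  constructor <;> linarith [neg_abs_le (f 1), le_abs_self (f 0), abs_nonneg (f 0), abs_nonneg (f 1)]

lemma transfer_monotoneOn {f : ℝ → ℝ} (hf : AntitoneOn f (Icc 0 1)) :
    MonotoneOn (transfer f) (Icc 0 1) := by
  intro x hx y hy hxy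
  have hS {z : ℝ} (hz : 0 ≤ z) := summable_transfer (fun _ => abs_le_of_antitoneOn hf) hz
  set g : ℕ → ℝ := fun n => f (branch n y)
  have hg : Monotone g := fun m n hmn =>
    hf (branch_mem_Icc _ hy.1) (branch_mem_Icc _ hy.1) (branch_antitone_left hmn hy.1)
  have hle (N : ℕ) : ∑ n ∈ Finset.range N, weight n x * f (branch n x) ≤
      ∑ n ∈ Finset.range N, weight n y * f (branch n y) +
        ((1 + y) / (N + 1 + y) - (1 + x) / (N + 1 + x)) * g N := by
    refine le_trans (Finset.sum_le_sum fun n _ => ?_) (sum_weight_mul_le_of_monotone hg hx.1 hxy N)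
    exact mul_le_mul_of_nonneg_left (hf (branch_mem_Icc _ hy.1) (branch_mem_Icc _ hx.1)
      (branch_antitone_right n hx.1 hxy)) (weight_nonneg n hx.1)
  have hz : Tendsto (fun N : ℕ => ((1 + y) / (N + 1 + y) - (1 + x) / (N + 1 + x)) * g N)
      atTop (𝓝 0) := by
    refine Tendsto.zero_mul_isBoundedUnder_le ?_ ⟨|f 0| + |f 1|, ?_⟩
    · simpa using (tendsto_tail y).sub (tendsto_tail x)
    · simp only [eventually_map]
      exact Eventually.of_forall fun n => abs_le_of_antitoneOn hf (branch_mem_Icc n hy.1)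
  simpa [transfer] using le_of_tendsto_of_tendsto' (hS hx.1).hasSum.tendsto_sum_nat
    ((hS hy.1).hasSum.tendsto_sum_nat.add hz) hle

lemma transfer_one_sub_transfer_zero_le {f : ℝ → ℝ} (hf : AntitoneOn f (Icc 0 1)) :
    transfer f 1 - transfer f 0 ≤ (f 0 - f 1) / 2 := by
  have hS {z : ℝ} (hz : 0 ≤ z) := summable_transfer (fun _ => abs_le_of_antitoneOn hf) hz
  have hsplit : transfer f 0 = f 1 / 2 + ∑' n, weight (n + 1) 0 * f (branch (n + 1) 0) := by
    rw [transfer, (hS le_rfl).tsum_eq_zero_add]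
    simp [weight, branch]
    ring
  have hone : transfer f 1 = 2 * ∑' n, weight (n + 1) 0 * f (branch (n + 1) 0) := by
    rw [transfer, ← tsum_mul_left]
    congr 1
    funext n
    have hb : branch n 1 = branch (n + 1) 0 := by simp [branch]
    have hw : weight n 1 = 2 * weight (n + 1) 0 := by
      simp only [weight]; push_cast; field_simp; ring
    rw [hb, hw, mul_assoc]
  have htail : HasSum (fun n => weight (n + 1) 0 * f 0) (f 0 / 2) := by
    have := (hasSum_nat_add_iff' 1).2 (hasSum_weight (le_refl (0 : ℝ)))
    have h2 : (1 - ∑ i ∈ Finset.range 1, weight i 0) * f 0 = f 0 / 2 := by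
      norm_num [weight]
      ring
    exact h2 ▸ this.mul_right (f 0)
  have hle : ∑' n, weight (n + 1) 0 * f (branch (n + 1) 0) ≤ f 0 / 2 := by
    rw [← htail.tsum_eq]
    refine ((summable_nat_add_iff 1).2 (hS le_rfl)).tsum_le_tsum (fun n => ?_) htail.summable
    have hb := branch_mem_Icc (n + 1) (le_refl (0 : ℝ))
    exact mul_le_mul_of_nonneg_left (hf (by simp) hb hb.1) (weight_nonneg _ le_rfl)
  linarith

lemma measurable_branch (n : ℕ) : Measurable (branch n) := by
  unfold branch; fun_prop

lemma measurable_weight (n : ℕ) : Measurable (weight n) := by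
  unfold weight; fun_prop

lemma measurable_transfer {f : ℝ → ℝ} (hf : Measurable f) : Measurable (transfer f) := by
  unfold transfer
  exact Measurable.tsum fun n => (measurable_weight n).mul (hf.comp (measurable_branch n))

lemma measurable_gaussMap : Measurable gaussMap := by
  unfold gaussMap
  exact Measurable.ite (measurableSet_singleton 0) measurable_const
    (measurable_fract.comp (by fun_prop))

lemma gaussMap_branch (n : ℕ) {y : ℝ} (hy : y ∈ Ico (0 : ℝ) 1) : gaussMap (branch n y) = y := by
  have hpos : (0 : ℝ) < n + 1 + y := by have := hy.1; positivity
  have h : (n : ℝ) + 1 + y = y + (n + 1 : ℕ) := by push_cast; ring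
  rw [gaussMap, if_neg (by unfold branch; positivity), branch, one_div_one_div, h,
    Int.fract_add_natCast, Int.fract_eq_self.2 hy]

lemma image_branch (n : ℕ) :
    branch n '' Ico 0 1 = Ioc (1 / ((n : ℝ) + 2)) (1 / ((n : ℝ) + 1)) := by
  ext x
  constructor
  · rintro ⟨y, hy, rfl⟩
    have := hy.1
    have := hy.2
    constructor
    · exact one_div_lt_one_div_of_lt (by positivity) (by linarith)
    · exact one_div_le_one_div_of_le (by positivity) (by linarith)
  · rintro ⟨h1, h2⟩
    have hx : 0 < x := lt_trans (by positivity) h1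
    refine ⟨1 / x - (n + 1), ⟨?_, ?_⟩, ?_⟩
    · rw [sub_nonneg]; exact (le_one_div (by positivity) hx).2 h2
    · have := (one_div_lt (by positivity) hx).1 h1
      linarith
    · simp [branch]

lemma iUnion_image_branch : ⋃ n, branch n '' Ico 0 1 = Ioc (0 : ℝ) 1 := by
  ext x
  simp only [image_branch, mem_iUnion, mem_Ioc]
  constructor
  · rintro ⟨n, h1, h2⟩
    refine ⟨lt_trans (by positivity) h1, h2.trans ?_⟩
    rw [div_le_one (by positivity)]
    linarith [(n.cast_nonneg : (0 : ℝ) ≤ n)]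
  · rintro ⟨h0, h1⟩
    have hfl : 1 ≤ ⌊1 / x⌋₊ := Nat.le_floor (by simpa using (one_le_div h0).2 h1)
    obtain ⟨n, hn⟩ := Nat.exists_eq_add_of_le' hfl
    have hlo := Nat.floor_le (one_div_pos.2 h0).le
    have hhi := Nat.lt_floor_add_one (1 / x)
    rw [hn] at hlo hhi
    push_cast at hlo hhi
    refine ⟨n, (one_div_lt (by positivity) h0).2 (by linarith),
      (le_one_div h0 (by positivity)).2 hlo⟩

lemma pairwise_disjoint_image_branch :
    Pairwise (Function.onFun Disjoint fun n => branch n '' Ico 0 1) := by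
  intro m n hmn
  refine Set.disjoint_left.2 ?_
  rintro _ ⟨x, hx, rfl⟩ ⟨y, hy, hxy⟩
  have h : y = x := by rw [← gaussMap_branch n hy, hxy, gaussMap_branch m hx]
  subst h
  have hy0 := hy.1
  simp only [branch, one_div, inv_inj, add_left_inj, Nat.cast_inj] at hxy
  exact hmn hxy.symm

lemma measurable_density : Measurable density := by
  unfold density; fun_prop

lemma density_nonneg {x : ℝ} (hx : 0 ≤ x) : 0 ≤ density x := by
  have := Real.log_pos one_lt_two
  unfold density; positivity

lemma integral_gaussMeasure (f : ℝ → ℝ) :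
    ∫ x, f x ∂gaussMeasure = ∫ x in Ico 0 1, density x * f x := by
  rw [gaussMeasure, integral_withDensity_eq_integral_toReal_smul
    measurable_density.ennreal_ofReal (by simp)]
  refine setIntegral_congr_fun measurableSet_Ico fun x hx => ?_
  simp [ENNReal.toReal_ofReal (density_nonneg hx.1)]

lemma ae_mem_Ico : ∀ᵐ x ∂gaussMeasure, x ∈ Ico (0 : ℝ) 1 :=
  (withDensity_absolutelyContinuous _ _).ae_le (ae_restrict_mem measurableSet_Ico)

lemma absolutelyContinuous_gaussMeasure : volume.restrict (Icc (0 : ℝ) 1) ≪ gaussMeasure := by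
  rw [← restrict_Ico_eq_restrict_Icc]
  refine withDensity_absolutelyContinuous' measurable_density.ennreal_ofReal.aemeasurable ?_
  filter_upwards [ae_restrict_mem measurableSet_Ico] with x hx
  have := hx.1
  have := Real.log_pos one_lt_two
  rw [Ne, ENNReal.ofReal_eq_zero, not_le, density]
  positivity

lemma integral_density {b : ℝ} (hb : 0 ≤ b) :
    ∫ x in (0 : ℝ)..b, density x = Real.log (1 + b) / Real.log 2 := by
  have h : ∀ x : ℝ, density x = (Real.log 2)⁻¹ * (1 + x)⁻¹ := fun x => by
    rw [density, mul_inv]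
  simp_rw [h]
  rw [intervalIntegral.integral_const_mul,
    intervalIntegral.integral_comp_add_left (fun x => x⁻¹) (1 : ℝ),
    integral_inv_of_pos (by norm_num) (by positivity)]
  simp [div_eq_inv_mul]

lemma density_le {x : ℝ} (hx : 0 ≤ x) : density x ≤ (Real.log 2)⁻¹ := by
  have := Real.log_pos one_lt_two
  unfold density
  gcongr
  nlinarith

lemma integrableOn_density : IntegrableOn density (Icc 0 1) := by
  refine Measure.integrableOn_of_bounded (M := (Real.log 2)⁻¹) (by simp)
    measurable_density.aestronglyMeasurable ?_
  filter_upwards [ae_restrict_mem measurableSet_Icc] with x hx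
  rw [Real.norm_of_nonneg (density_nonneg hx.1)]
  exact density_le hx.1

instance : IsProbabilityMeasure gaussMeasure := by
  constructor
  rw [gaussMeasure, withDensity_apply _ MeasurableSet.univ, Measure.restrict_univ,
    ← ofReal_integral_eq_lintegral_ofReal (integrableOn_density.mono_set Ico_subset_Icc_self),
    integral_Ico_eq_integral_Ioc, ← intervalIntegral.integral_of_le zero_le_one,
    integral_density zero_le_one]
  · norm_num [(Real.log_pos one_lt_two).ne']
  · filter_upwards [ae_restrict_mem measurableSet_Ico] with x hx using density_nonneg hx.1

lemma integral_indicator_Iic {b : ℝ} (h0 : 0 ≤ b) (h1 : b ≤ 1) :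
    ∫ x, (Iic b).indicator 1 x ∂gaussMeasure = Real.log (1 + b) / Real.log 2 := by
  rw [integral_gaussMeasure, integral_Ico_eq_integral_Ioc, ← integral_density h0,
    intervalIntegral.integral_of_le h0, ← integral_indicator measurableSet_Ioc,
    ← integral_indicator measurableSet_Ioc]
  congr 1
  funext x
  by_cases hx : x ∈ Ioc 0 b
  · have hx' : x ∈ Ioc (0 : ℝ) 1 := ⟨hx.1, hx.2.trans h1⟩
    simp [hx.2, indicator_of_mem hx, indicator_of_mem hx']
  · rw [indicator_of_notMem hx]
    by_cases hx' : x ∈ Ioc (0 : ℝ) 1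
    · have : x ∉ Iic b := fun h => hx ⟨hx'.1, h⟩
      simp [this]
    · rw [indicator_of_notMem hx']

lemma hasDerivAt_branch (n : ℕ) {y : ℝ} (hy : 0 ≤ y) :
    HasDerivAt (branch n) (-1 / ((n : ℝ) + 1 + y) ^ 2) y := by
  have h : (n : ℝ) + 1 + y ≠ 0 := by positivity
  have hb : branch n = (fun z => (n : ℝ) + 1 + z)⁻¹ := by
    funext z; simp [branch]
  rw [hb]
  exact ((hasDerivAt_id' y).const_add ((n : ℝ) + 1)).inv h

lemma setIntegral_image_branch (n : ℕ) (f g : ℝ → ℝ) :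
    ∫ x in branch n '' Ico 0 1, density x * (f x * g (gaussMap x)) =
      ∫ y, weight n y * f (branch n y) * g y ∂gaussMeasure := by
  rw [integral_gaussMeasure, integral_image_eq_integral_abs_deriv_smul measurableSet_Ico
    (fun y hy => (hasDerivAt_branch n hy.1).hasDerivWithinAt)
    (LeftInvOn.injOn (f₁' := gaussMap) fun y hy => gaussMap_branch n hy)]
  refine setIntegral_congr_fun measurableSet_Ico fun y hy => ?_
  have hy0 := hy.1
  have := Real.log_pos one_lt_two
  have hd : density (branch n y) = (n + 1 + y) / (Real.log 2 * (n + 2 + y)) := by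
    unfold density branch
    field_simp
    ring
  have habs : |-1 / ((n : ℝ) + 1 + y) ^ 2| = 1 / (n + 1 + y) ^ 2 := by
    rw [abs_div, abs_neg, abs_one, abs_of_nonneg (by positivity)]
  simp only [gaussMap_branch n hy, smul_eq_mul, hd, habs]
  simp only [density, weight]
  field_simp

/-- `transfer` is dual to composition with the Gauss map. -/
lemma integral_mul_comp_gaussMap {f g : ℝ → ℝ} (hf : Measurable f) (hg : Measurable g) {M B : ℝ}
    (hM : ∀ x ∈ Icc (0 : ℝ) 1, |f x| ≤ M) (hB : ∀ x, |g x| ≤ B) :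
    ∫ x, f x * g (gaussMap x) ∂gaussMeasure = ∫ y, transfer f y * g y ∂gaussMeasure := by
  have hM0 : 0 ≤ M := (abs_nonneg _).trans (hM 0 (by simp))
  have hL : HasSum (fun n => ∫ y, weight n y * f (branch n y) * g y ∂gaussMeasure)
      (∫ x, f x * g (gaussMap x) ∂gaussMeasure) := by
    rw [integral_gaussMeasure, integral_Ico_eq_integral_Ioc, ← iUnion_image_branch]
    simp_rw [← setIntegral_image_branch]
    refine hasSum_integral_iUnion (fun n => ?_) pairwise_disjoint_image_branch ?_
    · rw [image_branch]; exact measurableSet_Ioc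
    · rw [iUnion_image_branch]
      refine Measure.integrableOn_of_bounded (M := (Real.log 2)⁻¹ * (M * B)) (by simp)
        (measurable_density.mul (hf.mul (hg.comp measurable_gaussMap))).aestronglyMeasurable ?_
      filter_upwards [ae_restrict_mem measurableSet_Ioc] with x hx
      rw [norm_mul, norm_mul, Real.norm_of_nonneg (density_nonneg hx.1.le)]
      have h1 := density_le hx.1.le
      have h2 := hM x ⟨hx.1.le, hx.2⟩
      have h3 := hB (gaussMap x)
      have := Real.log_pos one_lt_two
      gcongr <;> assumption
  have hR : HasSum (fun n => ∫ y, weight n y * f (branch n y) * g y ∂gaussMeasure)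
      (∫ y, transfer f y * g y ∂gaussMeasure) := by
    refine hasSum_integral_of_dominated_convergence (fun n y => weight n y * (M * B))
      (fun n => ?_) (fun n => ?_) ?_ ?_ ?_
    · exact (((measurable_weight n).mul (hf.comp (measurable_branch n))).mul
        hg).aestronglyMeasurable
    · filter_upwards [ae_mem_Ico] with y hy
      rw [norm_mul, norm_mul, Real.norm_of_nonneg (weight_nonneg n hy.1), mul_assoc]
      have h2 := hM _ (branch_mem_Icc n hy.1)
      have h3 := hB y
      have := weight_nonneg n hy.1
      gcongr <;> assumption
    · filter_upwards [ae_mem_Ico] with y hy using (hasSum_weight hy.1).summable.mul_right _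
    · refine (integrable_const (M * B)).congr ?_
      filter_upwards [ae_mem_Ico] with y hy
      rw [((hasSum_weight hy.1).mul_right (M * B)).tsum_eq, one_mul]
    · filter_upwards [ae_mem_Ico] with y hy
      exact (summable_transfer hM hy.1).hasSum.mul_right (g y)
  exact hL.unique hR

lemma integral_comp_gaussMap {g : ℝ → ℝ} (hg : Measurable g) {B : ℝ} (hB : ∀ x, |g x| ≤ B) :
    ∫ x, g (gaussMap x) ∂gaussMeasure = ∫ x, g x ∂gaussMeasure := by
  have h := integral_mul_comp_gaussMap (measurable_const (a := (1 : ℝ))) hg (M := 1) (by simp) hB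
  simp only [one_mul] at h
  rw [h]
  refine integral_congr_ae ?_
  filter_upwards [ae_mem_Ico] with y hy
  rw [transfer_const 1 hy.1, one_mul]

lemma abs_sub_le_of_monotoneOn_or_antitoneOn {f : ℝ → ℝ}
    (hf : MonotoneOn f (Icc 0 1) ∨ AntitoneOn f (Icc 0 1)) {x : ℝ} (hx : x ∈ Icc (0 : ℝ) 1) :
    |f x - f 0| ≤ |f 1 - f 0| := by
  rcases hf with hf | hf
  · have h0 := hf (by simp) hx hx.1
    have h1 := hf hx (by simp) hx.2
    exact abs_le_abs_of_nonneg (by linarith) (by linarith)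
  · have h0 := hf (by simp) hx hx.1
    have h1 := hf hx (by simp) hx.2
    exact abs_le_abs_of_nonpos (by linarith) (by linarith)

lemma transfer_monotoneOn_or_antitoneOn {f : ℝ → ℝ}
    (hf : MonotoneOn f (Icc 0 1) ∨ AntitoneOn f (Icc 0 1)) :
    MonotoneOn (transfer f) (Icc 0 1) ∨ AntitoneOn (transfer f) (Icc 0 1) := by
  rcases hf with hf | hf
  · have h := transfer_monotoneOn hf.neg
    simp only [transfer_neg] at h
    exact Or.inr (by simpa using h.neg)
  · exact Or.inl (transfer_monotoneOn hf)

lemma abs_transfer_one_sub_transfer_zero_le {f : ℝ → ℝ}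
    (hf : MonotoneOn f (Icc 0 1) ∨ AntitoneOn f (Icc 0 1)) :
    |transfer f 1 - transfer f 0| ≤ |f 1 - f 0| / 2 := by
  have h01 : (0 : ℝ) ∈ Icc (0 : ℝ) 1 ∧ (1 : ℝ) ∈ Icc (0 : ℝ) 1 := by simp
  have key {f : ℝ → ℝ} (hf : AntitoneOn f (Icc 0 1)) :
      |transfer f 1 - transfer f 0| ≤ |f 1 - f 0| / 2 := by
    rw [abs_of_nonneg (sub_nonneg.2 (transfer_monotoneOn hf h01.1 h01.2 zero_le_one)), abs_sub_comm,
      abs_of_nonneg (sub_nonneg.2 (hf h01.1 h01.2 zero_le_one))]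
    exact transfer_one_sub_transfer_zero_le hf
  rcases hf with hf | hf
  · have h := key hf.neg
    simp only [transfer_neg] at h
    rw [abs_sub_comm, abs_sub_comm (f 1)]
    convert h using 2
    · ring
    · congr 1; ring
  · exact key hf

/-- Exponential decay of correlations for a monotone observable. -/
lemma abs_integral_mul_iterate_le {g : ℝ → ℝ} (hg : Measurable g) (hB : ∀ x, |g x| ≤ 1)
    (hg0 : ∫ x, g x ∂gaussMeasure = 0) (k : ℕ) {f : ℝ → ℝ} (hfm : Measurable f)
    (hf : MonotoneOn f (Icc 0 1) ∨ AntitoneOn f (Icc 0 1)) :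
    |∫ x, f x * g (gaussMap^[k] x) ∂gaussMeasure| ≤ |f 1 - f 0| * (1 / 2) ^ k := by
  have hbound {f : ℝ → ℝ} (hf : MonotoneOn f (Icc 0 1) ∨ AntitoneOn f (Icc 0 1)) :
      ∀ x ∈ Icc (0 : ℝ) 1, |f x| ≤ |f 0| + |f 1 - f 0| := fun x hx => by
    have h := abs_add_le (f 0) (f x - f 0)
    rw [add_sub_cancel] at h
    linarith [abs_sub_le_of_monotoneOn_or_antitoneOn hf hx]
  induction k generalizing f with
  | zero =>
    have hgi : Integrable g gaussMeasure :=
      .of_bound hg.aestronglyMeasurable 1 (ae_of_all _ hB)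
    have hfg : Integrable (fun x => f x * g x) gaussMeasure := by
      refine hgi.bdd_mul (c := |f 0| + |f 1 - f 0|) hfm.aestronglyMeasurable ?_
      filter_upwards [ae_mem_Ico] with x hx using hbound hf x ⟨hx.1, hx.2.le⟩
    have h : ∫ x, f x * g x ∂gaussMeasure = ∫ x, (f x - f 0) * g x ∂gaussMeasure := by
      simp_rw [sub_mul]
      rw [integral_sub hfg (hgi.const_mul _), integral_const_mul, hg0, mul_zero, sub_zero]
    simp only [Function.iterate_zero, id, pow_zero, mul_one]
    rw [h]
    have hle : ∀ᵐ x ∂gaussMeasure, ‖(f x - f 0) * g x‖ ≤ |f 1 - f 0| := by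
      filter_upwards [ae_mem_Ico] with x hx
      rw [norm_mul, ← mul_one |f 1 - f 0|]
      exact mul_le_mul (abs_sub_le_of_monotoneOn_or_antitoneOn hf ⟨hx.1, hx.2.le⟩) (hB x)
        (norm_nonneg _) (abs_nonneg _)
    simpa using norm_integral_le_of_norm_le_const hle
  | succ k ih =>
    have h := integral_mul_comp_gaussMap (g := fun x => g (gaussMap^[k] x)) hfm
      (hg.comp (measurable_gaussMap.iterate k)) (hbound hf) (fun x => hB _)
    simp only [Function.iterate_succ_apply]
    rw [h]
    refine (ih (measurable_transfer hfm) (transfer_monotoneOn_or_antitoneOn hf)).trans ?_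
    rw [pow_succ, mul_comm ((1 / 2 : ℝ) ^ k), ← mul_assoc]
    gcongr
    linarith [abs_transfer_one_sub_transfer_zero_le hf]

lemma measurable_birkhoffSum {f : ℝ → ℝ} (hf : Measurable f) (n : ℕ) :
    Measurable (birkhoffSum gaussMap f n) := by
  unfold birkhoffSum
  exact Finset.measurable_sum _ fun k _ => hf.comp (measurable_gaussMap.iterate k)

lemma abs_birkhoffSum_le {f : ℝ → ℝ} (hB : ∀ x, |f x| ≤ 1) (n : ℕ) (x : ℝ) :
    |birkhoffSum gaussMap f n x| ≤ n := by
  refine (Finset.abs_sum_le_sum_abs _ _).trans ?_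
  simpa using Finset.sum_le_sum (s := Finset.range n) fun k _ => hB (gaussMap^[k] x)

/-- Linear growth of the variance of the Birkhoff sums of a centred monotone observable. -/
lemma integral_birkhoffSum_sq_le {f : ℝ → ℝ} (hfm : Measurable f) (hB : ∀ x, |f x| ≤ 1)
    (hf0 : ∫ x, f x ∂gaussMeasure = 0)
    (hf : MonotoneOn f (Icc 0 1) ∨ AntitoneOn f (Icc 0 1)) (n : ℕ) :
    ∫ x, birkhoffSum gaussMap f n x ^ 2 ∂gaussMeasure ≤ 5 * n := by
  have hint {h : ℝ → ℝ} (hm : Measurable h) (C : ℝ) (hC : ∀ x, |h x| ≤ C) :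
      Integrable h gaussMeasure := .of_bound hm.aestronglyMeasurable C (ae_of_all _ hC)
  have hcov (n : ℕ) : ∫ x, f x * birkhoffSum gaussMap f n (gaussMap x) ∂gaussMeasure ≤ 2 := by
    simp only [birkhoffSum, Finset.mul_sum, ← Function.iterate_succ_apply]
    rw [integral_finsetSum]
    · have hosc : |f 1 - f 0| ≤ 2 := (abs_sub _ _).trans (by linarith [hB 0, hB 1])
      have hgeom : ∑ k ∈ Finset.range n, (1 / 2 : ℝ) ^ (k + 1) ≤ 1 := by
        have h := (summable_geometric_two).sum_le_tsum (Finset.range n) fun _ _ => by positivity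
        rw [tsum_geometric_two] at h
        simp_rw [pow_succ]
        rw [← Finset.sum_mul]
        linarith
      calc _ ≤ ∑ k ∈ Finset.range n, 2 * (1 / 2 : ℝ) ^ (k + 1) := Finset.sum_le_sum fun k _ => by
            refine ((le_abs_self _).trans
              (abs_integral_mul_iterate_le hfm hB hf0 (k + 1) hfm hf)).trans ?_
            gcongr
        _ ≤ 2 := by rw [← Finset.mul_sum]; linarith
    · intro k _
      refine hint (hfm.mul (hfm.comp (measurable_gaussMap.iterate _))) 1 fun x => ?_
      rw [abs_mul]
      exact mul_le_one₀ (hB _) (abs_nonneg _) (hB _)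
  induction n with
  | zero => simp
  | succ n ih =>
    have hSm := measurable_birkhoffSum hfm n
    have hSB := abs_birkhoffSum_le hB n
    have hcomp := hSm.comp measurable_gaussMap
    have hsqB (x : ℝ) : |birkhoffSum gaussMap f n x ^ 2| ≤ (n : ℝ) ^ 2 := by
      rw [abs_pow]
      exact pow_le_pow_left₀ (abs_nonneg _) (hSB x) 2
    have hfB (x : ℝ) : |f x ^ 2| ≤ 1 := by
      rw [abs_pow]
      exact pow_le_one₀ (abs_nonneg _) (hB x)
    have hexp (x : ℝ) : birkhoffSum gaussMap f (n + 1) x ^ 2 =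
        f x ^ 2 + 2 * (f x * birkhoffSum gaussMap f n (gaussMap x)) +
          birkhoffSum gaussMap f n (gaussMap x) ^ 2 := by
      rw [birkhoffSum_succ']; ring
    have hi1 := hint (hfm.pow_const 2) 1 hfB
    have hi2 : Integrable (fun x => f x * birkhoffSum gaussMap f n (gaussMap x)) gaussMeasure :=
      hint (hfm.mul hcomp) n fun x => by
        rw [abs_mul, ← one_mul (n : ℝ)]
        exact mul_le_mul (hB x) (hSB _) (abs_nonneg _) zero_le_one
    have hi3 : Integrable (fun x => birkhoffSum gaussMap f n (gaussMap x) ^ 2) gaussMeasure :=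
      hint (hcomp.pow_const 2) (n ^ 2) fun x => hsqB _
    have hi12 : Integrable
        (fun x => f x ^ 2 + 2 * (f x * birkhoffSum gaussMap f n (gaussMap x))) gaussMeasure :=
      hi1.add (hi2.const_mul 2)
    have hsq : ∫ x, f x ^ 2 ∂gaussMeasure ≤ 1 := by
      refine (integral_mono hi1 (integrable_const 1) fun x => (le_abs_self _).trans (hfB x)).trans ?_
      simp
    have hinv := integral_comp_gaussMap (hSm.pow_const 2) hsqB
    simp_rw [hexp]
    rw [integral_add hi12 hi3, integral_add hi1 (hi2.const_mul 2),
      integral_const_mul]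
    push_cast
    linarith [hcov n]

lemma tendsto_birkhoffSum_div_floor_pow {f : ℝ → ℝ} (hfm : Measurable f) (hB : ∀ x, |f x| ≤ 1)
    (hf0 : ∫ x, f x ∂gaussMeasure = 0)
    (hf : MonotoneOn f (Icc 0 1) ∨ AntitoneOn f (Icc 0 1)) {c : ℝ} (hc : 1 < c) :
    ∀ᵐ x ∂gaussMeasure, Tendsto
      (fun n : ℕ => birkhoffSum gaussMap f ⌊c ^ n⌋₊ x / (⌊c ^ n⌋₊ : ℝ)) atTop (𝓝 0) := by
  set m : ℕ → ℕ := fun n => ⌊c ^ n⌋₊ with hm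
  set h : ℕ → ℝ → ℝ := fun n x => (birkhoffSum gaussMap f (m n) x / (m n : ℝ)) ^ 2 with hh
  have hc0 : 0 < 1 - c⁻¹ := sub_pos.2 (inv_lt_one_of_one_lt₀ hc)
  have hmpos (n : ℕ) : (0 : ℝ) < m n :=
    (mul_pos hc0 (by positivity)).trans_le (mul_pow_le_nat_floor_pow hc n)
  have hmeas (n : ℕ) : Measurable (h n) :=
    ((measurable_birkhoffSum hfm (m n)).div_const _).pow_const 2
  have hnonneg (n : ℕ) (x : ℝ) : 0 ≤ h n x := sq_nonneg _
  have hle (n : ℕ) : ∫ x, h n x ∂gaussMeasure ≤ 5 * (1 - c⁻¹)⁻¹ * c⁻¹ ^ n := by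
    simp only [hh, div_pow]
    rw [integral_div, div_le_iff₀ (pow_pos (hmpos n) 2)]
    refine (integral_birkhoffSum_sq_le hfm hB hf0 hf (m n)).trans ?_
    have h1 : 1 ≤ (1 - c⁻¹)⁻¹ * c⁻¹ ^ n * m n := by
      rw [inv_pow, ← mul_inv, inv_mul_eq_div, one_le_div (mul_pos hc0 (by positivity))]
      exact mul_pow_le_nat_floor_pow hc n
    nlinarith [hmpos n]
  have hint (n : ℕ) : Integrable (h n) gaussMeasure := by
    refine .of_bound (hmeas n).aestronglyMeasurable 1 (ae_of_all _ fun x => ?_)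
    rw [Real.norm_of_nonneg (hnonneg n x)]
    refine (sq_le_one_iff_abs_le_one _).2 ?_
    rw [abs_div, abs_of_pos (hmpos n), div_le_one (hmpos n)]
    exact abs_birkhoffSum_le hB _ _
  have hsum : ∑' n, ∫⁻ x, ENNReal.ofReal (h n x) ∂gaussMeasure ≠ ⊤ := by
    simp_rw [← fun n => ofReal_integral_eq_lintegral_ofReal (hint n) (ae_of_all _ (hnonneg n))]
    refine Summable.tsum_ofReal_ne_top (Summable.of_nonneg_of_le
      (fun n => integral_nonneg (hnonneg n)) hle ?_)
    exact (summable_geometric_of_lt_one (by positivity) (inv_lt_one_of_one_lt₀ hc)).mul_left _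
  rw [← lintegral_tsum fun n => (hmeas n).ennreal_ofReal.aemeasurable] at hsum
  filter_upwards [ae_lt_top (Measurable.tsum fun n => (hmeas n).ennreal_ofReal) hsum] with x hx
  have ht := (ENNReal.tendsto_toReal ENNReal.zero_ne_top).comp
    (ENNReal.tendsto_atTop_zero_of_tsum_ne_top hx.ne)
  have ht' : Tendsto (fun n => h n x) atTop (𝓝 0) := by
    simpa [Function.comp_def, ENNReal.toReal_ofReal (hnonneg _ x)] using ht
  rw [tendsto_zero_iff_abs_tendsto_zero]
  simpa [hh, Function.comp_def, Real.sqrt_sq_eq_abs] using ht'.sqrt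

lemma gaussMap_iterate_nonneg {x : ℝ} (hx : 0 ≤ x) (k : ℕ) : 0 ≤ gaussMap^[k] x := by
  cases k with
  | zero => exact hx
  | succ k =>
    rw [Function.iterate_succ_apply', gaussMap]
    split_ifs
    · exact le_rfl
    · exact Int.fract_nonneg _

/-- Almost every orbit visits `[0, b]` with the frequency prescribed by the Gauss measure. -/
lemma tendsto_frequency_Iic {b : ℝ} (h0 : 0 ≤ b) (h1 : b ≤ 1) :
    ∀ᵐ x ∂gaussMeasure, Tendsto
      (fun n : ℕ => birkhoffSum gaussMap ((Iic b).indicator (1 : ℝ → ℝ)) n x / n) atTop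
      (𝓝 (Real.log (1 + b) / Real.log 2)) := by
  set p := Real.log (1 + b) / Real.log 2 with hp
  set F : ℝ → ℝ := (Iic b).indicator 1 with hF
  have hlog := Real.log_pos one_lt_two
  have hp0 : 0 ≤ p := div_nonneg (Real.log_nonneg (by linarith)) hlog.le
  have hp1 : p ≤ 1 := (div_le_one hlog).2 (Real.log_le_log (by linarith) (by linarith))
  have hF01 (x : ℝ) : 0 ≤ F x ∧ F x ≤ 1 := by
    by_cases hx : x ∈ Iic b <;> simp [hF, hx]
  have hFm : Measurable F := measurable_one.indicator measurableSet_Iic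
  have hB (x : ℝ) : |F x - p| ≤ 1 := by
    rw [abs_le]; constructor <;> linarith [(hF01 x).1, (hF01 x).2]
  have hFi : Integrable F gaussMeasure := .of_bound hFm.aestronglyMeasurable 1
    (ae_of_all _ fun x => by rw [Real.norm_of_nonneg (hF01 x).1]; exact (hF01 x).2)
  have hcent : ∫ x, (F x - p) ∂gaussMeasure = 0 := by
    rw [integral_sub hFi (integrable_const p), integral_indicator_Iic h0 h1]
    simp [hp]
  have hanti : AntitoneOn (fun x => F x - p) (Icc 0 1) := by
    intro x _ y _ hxy
    by_cases hy : y ∈ Iic b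
    · have hx : x ∈ Iic b := hxy.trans hy
      simp [hF, hx, hy]
    · have hy0 : F y = 0 := indicator_of_notMem hy _
      linarith [(hF01 x).1]
  have hall : ∀ᵐ x ∂gaussMeasure, ∀ k : ℕ, Tendsto (fun n : ℕ =>
      birkhoffSum gaussMap (fun x => F x - p) ⌊(1 + 1 / ((k : ℝ) + 1)) ^ n⌋₊ x /
        (⌊(1 + 1 / ((k : ℝ) + 1)) ^ n⌋₊ : ℝ)) atTop (𝓝 0) :=
    ae_all_iff.2 fun k => tendsto_birkhoffSum_div_floor_pow (hFm.sub_const p) hB hcent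
      (Or.inr hanti) (lt_add_of_pos_right _ (by positivity))
  filter_upwards [hall] with x hx
  refine tendsto_div_of_monotone_of_tendsto_div_floor_pow _ _ ?_
    (fun k => 1 + 1 / ((k : ℝ) + 1)) (fun k => lt_add_of_pos_right _ (by positivity)) ?_ fun k => ?_
  · refine monotone_nat_of_le_succ fun n => ?_
    rw [birkhoffSum_succ]
    linarith [(hF01 (gaussMap^[n] x)).1]
  · simpa using tendsto_one_div_add_atTop_nhds_zero_nat.const_add (1 : ℝ)
  · refine ((hx k).add_const p).congr' ?_ |>.trans (by simp)
    refine Eventually.of_forall fun n => ?_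
    have hpos : (0 : ℝ) < ⌊(1 + 1 / ((k : ℝ) + 1)) ^ n⌋₊ := by
      rw [Nat.cast_pos, Nat.floor_pos]
      exact one_le_pow₀ (by simp; positivity)
    simp only [birkhoffSum, Finset.sum_sub_distrib, Finset.sum_const, Finset.card_range,
      nsmul_eq_mul]
    rw [sub_div, mul_div_cancel_left₀ _ hpos.ne', sub_add_cancel]

lemma floor_one_div_eq_iff {j : ℕ} (hj : 1 ≤ j) {x : ℝ} (hx : 0 ≤ x) :
    ⌊1 / x⌋ = (j : ℤ) ↔ x ∈ Iic (1 / (j : ℝ)) ∧ x ∉ Iic (1 / ((j : ℝ) + 1)) := by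
  have hj0 : (0 : ℝ) < j := by exact_mod_cast hj
  rcases hx.eq_or_lt with rfl | hx
  · have h : (0 : ℝ) ≤ 1 / ((j : ℝ) + 1) := by positivity
    simp only [div_zero, Int.floor_zero, mem_Iic, h, not_true, and_false, iff_false]
    omega
  · rw [Int.floor_eq_iff, mem_Iic, mem_Iic, not_le, le_one_div hx hj0,
      one_div_lt (by positivity) hx, Int.cast_natCast]

lemma card_filter_digit_eq {j : ℕ} (hj : 1 ≤ j) {x : ℝ} (hx : 0 ≤ x) (n : ℕ) :
    (((Finset.Icc 1 n).filter fun k => ⌊1 / (gaussMap^[k - 1] x)⌋ = (j : ℤ)).card : ℝ) =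
      birkhoffSum gaussMap ((Iic (1 / (j : ℝ))).indicator (1 : ℝ → ℝ)) n x -
        birkhoffSum gaussMap ((Iic (1 / ((j : ℝ) + 1))).indicator (1 : ℝ → ℝ)) n x := by
  rw [Finset.card_filter, Nat.cast_sum, birkhoffSum, birkhoffSum, ← Finset.sum_sub_distrib]
  refine Finset.sum_nbij' (· - 1) (· + 1) (fun k hk => ?_) (fun k hk => ?_) (fun k hk => ?_)
    (fun k _ => by simp) fun k _ => ?_
  · simp only [Finset.mem_Icc, Finset.mem_range] at hk ⊢; omega
  · simp only [Finset.mem_Icc, Finset.mem_range] at hk ⊢; omega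
  · simp only [Finset.mem_Icc] at hk; omega
  · have hle : 1 / ((j : ℝ) + 1) ≤ 1 / j :=
      one_div_le_one_div_of_le (by exact_mod_cast hj) (by linarith)
    simp only [floor_one_div_eq_iff hj (gaussMap_iterate_nonneg hx (k - 1))]
    by_cases h1 : gaussMap^[k - 1] x ∈ Iic (1 / ((j : ℝ) + 1))
    · have h2 : gaussMap^[k - 1] x ∈ Iic (1 / (j : ℝ)) := h1.trans hle
      rw [indicator_of_mem h1, indicator_of_mem h2, if_neg fun h => h.2 h1]
      simp
    · rw [indicator_of_notMem h1]
      by_cases h2 : gaussMap^[k - 1] x ∈ Iic (1 / (j : ℝ))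
      · rw [indicator_of_mem h2, if_pos ⟨h2, h1⟩]
        simp
      · rw [indicator_of_notMem h2, if_neg fun h => h2 h.1]
        simp

end GaussMap

/-- For Lebesgue-almost every `α ∈ [0,1]`, the asymptotic frequency of the digit `j`
in the regular continued fraction expansion of `α` equals
`(1/log 2)·(2·log(1+j) − log j − log(2+j))`.  Here the `k`-th digit is
`a_k(α) = ⌊1/T_G^{k−1}(α)⌋`. -/
theorem digit_frequency (j : ℕ) (hj : 1 ≤ j) :
    ∀ᵐ α ∂(MeasureTheory.volume.restrict (Set.Icc (0 : ℝ) 1)),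
      Filter.Tendsto
        (fun n : ℕ =>
          (((Finset.Icc 1 n).filter
              (fun k => ⌊1 / (gaussMap^[k - 1] α)⌋ = (j : ℤ))).card : ℝ) / (n : ℝ))
        Filter.atTop
        (nhds ((1 / Real.log 2) *
          (2 * Real.log (1 + (j : ℝ)) - Real.log (j : ℝ) - Real.log (2 + (j : ℝ))))) := by
  have hj1 : (1 : ℝ) ≤ j := by exact_mod_cast hj
  have hj0 : (0 : ℝ) < j := by linarith
  have hfreq {b : ℝ} (h0 : 0 ≤ b) (h1 : b ≤ 1) :=
    GaussMap.absolutelyContinuous_gaussMeasure.ae_le (GaussMap.tendsto_frequency_Iic h0 h1)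
  filter_upwards [MeasureTheory.ae_restrict_mem measurableSet_Icc,
    hfreq (b := 1 / (j : ℝ)) (by positivity) ((div_le_one hj0).2 hj1),
    hfreq (b := 1 / ((j : ℝ) + 1)) (by positivity)
      ((div_le_one (by positivity)).2 (by linarith))] with x hx hA hB
  have hlim : (1 / Real.log 2) *
      (2 * Real.log (1 + (j : ℝ)) - Real.log (j : ℝ) - Real.log (2 + (j : ℝ))) =
      Real.log (1 + 1 / (j : ℝ)) / Real.log 2 - Real.log (1 + 1 / ((j : ℝ) + 1)) / Real.log 2 := by
    have e1 : 1 + 1 / (j : ℝ) = (1 + j) / j := by field_simp; ring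
    have e2 : 1 + 1 / ((j : ℝ) + 1) = (2 + j) / (1 + j) := by field_simp; ring
    rw [e1, e2, Real.log_div (by positivity) (by positivity),
      Real.log_div (by positivity) (by positivity)]
    ring
  rw [hlim]
  refine (hA.sub hB).congr fun n => ?_
  rw [GaussMap.card_filter_digit_eq hj hx.1, sub_div]
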